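/- arXiv:1811.05812 — 3 statements merged into one kernel-verified Lean document; each statement's English description precedes it below -/
import Mathlib

section
/- Let E = EuclideanSpace ℝ (Fin d), let s, t ⊆ E be finite sets, and let P = convexHull ℝ s and Q = convexHull ℝ t. Assume the non-degeneracy condition: for every nonempty exposed face F₁ of P and every nonempty exposed face G₁ of Q, finrank(vectorSpan ℝ (F₁ + G₁)) = finrank(vectorSpan ℝ F₁) + finrank(vectorSpan ℝ G₁). Let F and F' be nonempty exposed faces of P with F' ⊆ F, let G be a nonempty exposed face of Q, and suppose F + G is an exposed face of P + Q. Then F' + G is an exposed face of P + Q, and F' + G ⊆ F + G. -/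
open Pointwise

/-!
Exposedness is transitive in a polytope `convexHull 𝕜 u`: if `l` exposes `B` and `m` exposes `C`
inside `B`, then for large `N` the functional `N • l + m` is maximal on `C` over the finite set `u`,
hence over the polytope, and `C` is the part of `B` where it is maximal. As `P + Q` is the polytope
`convexHull 𝕜 (s + t)`, it is enough to expose `F' + G` inside `F + G`. Non-degeneracy makes the
directions of `F` and `G` independent, so some functional agrees with one exposing `F'` on the
direction of `F` and vanishes on the direction of `G`; over `F + G` it is maximal exactly on
`F' + G`.
-/

theorem exists_forall_le_mul {ι 𝕜 : Type*} [Field 𝕜] [LinearOrder 𝕜] [IsStrictOrderedRing 𝕜]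
    {u : Set ι} (hu : u.Finite) {f g : ι → 𝕜} (hf : ∀ i ∈ u, 0 ≤ f i)
    (hg : ∀ i ∈ u, f i = 0 → g i ≤ 0) : ∃ N : 𝕜, ∀ i ∈ u, g i ≤ N * f i := by
  suffices ∀ᶠ N : 𝕜 in Filter.atTop, ∀ i ∈ u, g i ≤ N * f i from this.exists
  rw [Filter.eventually_all_finite hu]
  intro i hi
  rcases (hf i hi).eq_or_lt with h | h
  · exact .of_forall fun N ↦ by simpa [← h] using hg i hi h.symm
  · filter_upwards [Filter.eventually_ge_atTop (g i / f i)] with N hN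
    exact (div_le_iff₀ h).mp hN

section LinearAlgebra

variable {𝕜 E : Type*}

theorem disjoint_of_finrank_sup_eq_add [DivisionRing 𝕜] [AddCommGroup E] [Module 𝕜 E]
    {V W : Submodule 𝕜 E} [FiniteDimensional 𝕜 V] [FiniteDimensional 𝕜 W]
    (h : Module.finrank 𝕜 ↥(V ⊔ W) = Module.finrank 𝕜 V + Module.finrank 𝕜 W) :
    Disjoint V W := by
  have hdim := Submodule.finrank_sup_add_finrank_inf_eq V W
  rw [disjoint_iff, ← Submodule.finrank_eq_zero (R := 𝕜)]
  omega

theorem vectorSpan_add [Ring 𝕜] [AddCommGroup E] [Module 𝕜 E] {A B : Set E}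
    (hA : A.Nonempty) (hB : B.Nonempty) :
    vectorSpan 𝕜 (A + B) = vectorSpan 𝕜 A ⊔ vectorSpan 𝕜 B := by
  obtain ⟨a₀, ha₀⟩ := hA
  obtain ⟨b₀, hb₀⟩ := hB
  apply le_antisymm
  · rw [vectorSpan_def, Submodule.span_le]
    rintro _ ⟨_, ⟨a, ha, b, hb, rfl⟩, _, ⟨a', ha', b', hb', rfl⟩, rfl⟩
    simp only [vsub_eq_sub, add_sub_add_comm, SetLike.mem_coe]
    exact Submodule.add_mem_sup (vsub_mem_vectorSpan 𝕜 ha ha') (vsub_mem_vectorSpan 𝕜 hb hb')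
  · rw [sup_le_iff, vectorSpan_def 𝕜 A, vectorSpan_def 𝕜 B, Submodule.span_le, Submodule.span_le]
    constructor
    · rintro _ ⟨a, ha, a', ha', rfl⟩
      simpa only [vsub_eq_sub, add_sub_add_right_eq_sub, SetLike.mem_coe] using
        vsub_mem_vectorSpan 𝕜 (Set.add_mem_add ha hb₀) (Set.add_mem_add ha' hb₀)
    · rintro _ ⟨b, hb, b', hb', rfl⟩
      simpa only [vsub_eq_sub, add_sub_add_left_eq_sub, SetLike.mem_coe] using
        vsub_mem_vectorSpan 𝕜 (Set.add_mem_add ha₀ hb) (Set.add_mem_add ha₀ hb')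

theorem finiteDimensional_vectorSpan_convexHull [DivisionRing 𝕜] [PartialOrder 𝕜]
    [AddCommGroup E] [Module 𝕜 E] {u : Set E} (hu : u.Finite) :
    FiniteDimensional 𝕜 (vectorSpan 𝕜 (convexHull 𝕜 u)) := by
  rw [← direction_affineSpan, affineSpan_convexHull, direction_affineSpan]
  exact finiteDimensional_vectorSpan_of_finite 𝕜 hu

theorem exists_strongDual_extending_of_disjoint [Field 𝕜] [TopologicalSpace 𝕜]
    [IsTopologicalRing 𝕜] [AddCommGroup E] [Module 𝕜 E] [TopologicalSpace E] [SeparatingDual 𝕜 E]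
    {V W : Submodule 𝕜 E} [FiniteDimensional 𝕜 V] [FiniteDimensional 𝕜 W] (h : Disjoint V W)
    (f : Module.Dual 𝕜 V) (g : Module.Dual 𝕜 W) :
    ∃ φ : StrongDual 𝕜 E, (∀ v : V, φ v = f v) ∧ ∀ w : W, φ w = g w := by
  have hinj : Function.Injective (V.subtype.coprod W.subtype) := by
    rw [← LinearMap.ker_eq_bot, LinearMap.ker_coprod_of_disjoint_range _ _ (by simpa using h),
      Submodule.ker_subtype, Submodule.ker_subtype, Submodule.prod_bot]
  obtain ⟨φ, hφ⟩ := SeparatingDual.dualMap_surjective_iff.mpr hinj (f.coprod g)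
  exact ⟨φ, fun v ↦ by simpa using LinearMap.congr_fun hφ (v, 0),
    fun w ↦ by simpa using LinearMap.congr_fun hφ (0, w)⟩

end LinearAlgebra

section Exposed

variable {𝕜 E : Type*} [TopologicalSpace 𝕜] [AddCommGroup E] [TopologicalSpace E]

theorem mem_toExposed_iff_of_mem [Ring 𝕜] [PartialOrder 𝕜] [Module 𝕜 E] {l : StrongDual 𝕜 E}
    {A : Set E} {c x : E} (hc : c ∈ l.toExposed A) : x ∈ l.toExposed A ↔ x ∈ A ∧ l x = l c :=
  ⟨fun hx ↦ ⟨hx.1, (hc.2 x hx.1).antisymm (hx.2 c hc.1)⟩,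
    fun ⟨hxA, hx⟩ ↦ ⟨hxA, fun y hy ↦ (hc.2 y hy).trans_eq hx.symm⟩⟩

theorem toExposed_add [Ring 𝕜] [PartialOrder 𝕜] [IsOrderedRing 𝕜] [Module 𝕜 E]
    (l : StrongDual 𝕜 E) (A B : Set E) :
    l.toExposed (A + B) = l.toExposed A + l.toExposed B := by
  ext z
  constructor
  · rintro ⟨⟨a, ha, b, hb, rfl⟩, hmax⟩
    refine Set.add_mem_add ⟨ha, fun a' ha' ↦ ?_⟩ ⟨hb, fun b' hb' ↦ ?_⟩
    · simpa using hmax _ (Set.add_mem_add ha' hb)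
    · simpa using hmax _ (Set.add_mem_add ha hb')
  · rintro ⟨a, ha, b, hb, rfl⟩
    refine ⟨Set.add_mem_add ha.1 hb.1, ?_⟩
    rintro _ ⟨a', ha', b', hb', rfl⟩
    simpa using add_le_add (ha.2 a' ha') (hb.2 b' hb')

theorem toExposed_congr_of_eqOn_vectorSpan [Ring 𝕜] [PartialOrder 𝕜] [IsOrderedRing 𝕜] [Module 𝕜 E]
    {l m : StrongDual 𝕜 E} {A : Set E} (h : Set.EqOn l m (vectorSpan 𝕜 A)) :
    l.toExposed A = m.toExposed A := by
  have hle {x y : E} (hx : x ∈ A) (hy : y ∈ A) : l y ≤ l x ↔ m y ≤ m x := by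
    rw [← sub_nonneg, ← map_sub, ← vsub_eq_sub, h (vsub_mem_vectorSpan 𝕜 hx hy), vsub_eq_sub,
      map_sub, sub_nonneg]
  ext x
  exact and_congr_right fun hx ↦ forall₂_congr fun y hy ↦ hle hx hy

theorem isExposed_add_of_disjoint_vectorSpan [Field 𝕜] [PartialOrder 𝕜] [IsOrderedRing 𝕜]
    [IsTopologicalRing 𝕜] [Module 𝕜 E] [SeparatingDual 𝕜 E] {F F' G G' : Set E}
    [FiniteDimensional 𝕜 (vectorSpan 𝕜 F)] [FiniteDimensional 𝕜 (vectorSpan 𝕜 G)]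
    (hdisj : Disjoint (vectorSpan 𝕜 F) (vectorSpan 𝕜 G))
    (hF' : IsExposed 𝕜 F F') (hG' : IsExposed 𝕜 G G') : IsExposed 𝕜 (F + G) (F' + G') := by
  intro hne
  obtain ⟨l, hl : F' = l.toExposed F⟩ := hF' hne.of_add_left
  obtain ⟨m, hm : G' = m.toExposed G⟩ := hG' hne.of_add_right
  obtain ⟨φ, hφF, hφG⟩ := exists_strongDual_extending_of_disjoint hdisj
    (l.toLinearMap.domRestrict _) (m.toLinearMap.domRestrict _)
  refine ⟨φ, ?_⟩
  change F' + G' = φ.toExposed (F + G)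
  rw [toExposed_add, hl, hm, toExposed_congr_of_eqOn_vectorSpan fun v hv ↦ hφF ⟨v, hv⟩,
    toExposed_congr_of_eqOn_vectorSpan fun w hw ↦ hφG ⟨w, hw⟩]

theorem mem_toExposed_convexHull [Ring 𝕜] [PartialOrder 𝕜] [IsOrderedRing 𝕜] [Module 𝕜 E]
    {l : StrongDual 𝕜 E} {u : Set E} {c : E}
    (hc : c ∈ convexHull 𝕜 u) (hmax : ∀ v ∈ u, l v ≤ l c) : c ∈ l.toExposed (convexHull 𝕜 u) :=
  ⟨hc, fun _ hx ↦ convexHull_min hmax (convex_halfSpace_le l.isLinear (l c)) hx⟩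

theorem toExposed_toExposed_eq_inter [CommRing 𝕜] [PartialOrder 𝕜] [IsTopologicalRing 𝕜]
    [Module 𝕜 E] {A : Set E} {l m : StrongDual 𝕜 E} {c : E} {N : 𝕜}
    (hc : c ∈ m.toExposed (l.toExposed A)) (hcN : c ∈ (N • l + m).toExposed A) :
    m.toExposed (l.toExposed A) = l.toExposed A ∩ (N • l + m).toExposed A := by
  ext x
  rw [Set.mem_inter_iff, mem_toExposed_iff_of_mem hc, mem_toExposed_iff_of_mem hcN]
  refine and_congr_right fun hx ↦ ?_
  have hlx : l x = l c := ((mem_toExposed_iff_of_mem hc.1).mp hx).2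
  simp [hx.1, hlx]

variable [Field 𝕜] [LinearOrder 𝕜] [IsStrictOrderedRing 𝕜] [IsTopologicalRing 𝕜] [Module 𝕜 E]

theorem exists_mem_toExposed_smul_add_convexHull {u : Set E} (hu : u.Finite)
    {l m : StrongDual 𝕜 E} {c : E} (hc : c ∈ m.toExposed (l.toExposed (convexHull 𝕜 u))) :
    ∃ N : 𝕜, c ∈ (N • l + m).toExposed (convexHull 𝕜 u) := by
  have hl : ∀ v ∈ u, 0 ≤ l c - l v := fun v hv ↦
    sub_nonneg.mpr (hc.1.2 v (subset_convexHull 𝕜 u hv))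
  have hm : ∀ v ∈ u, l c - l v = 0 → m v - m c ≤ 0 := fun v hv hlv ↦
    sub_nonpos.mpr <| hc.2 v <| (mem_toExposed_iff_of_mem hc.1).mpr
      ⟨subset_convexHull 𝕜 u hv, (sub_eq_zero.mp hlv).symm⟩
  obtain ⟨N, hN⟩ := exists_forall_le_mul hu hl hm
  refine ⟨N, mem_toExposed_convexHull hc.1.1 fun v hv ↦ ?_⟩
  simp only [add_apply, smul_apply, smul_eq_mul]
  linarith [hN v hv]

theorem isExposed_trans_of_convexHull {u B C : Set E} (hu : u.Finite)
    (hB : IsExposed 𝕜 (convexHull 𝕜 u) B) (hC : IsExposed 𝕜 B C) :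
    IsExposed 𝕜 (convexHull 𝕜 u) C := by
  rcases C.eq_empty_or_nonempty with rfl | ⟨c, hc⟩
  · exact isExposed_empty
  obtain ⟨l, rfl : B = l.toExposed _⟩ := hB ⟨c, hC.subset hc⟩
  obtain ⟨m, rfl : C = m.toExposed _⟩ := hC ⟨c, hc⟩
  obtain ⟨N, hcN⟩ := exists_mem_toExposed_smul_add_convexHull hu hc
  rw [toExposed_toExposed_eq_inter hc hcN]
  exact hB.inter ContinuousLinearMap.toExposed.isExposed

theorem subface_minkowski_sum_left_general [SeparatingDual 𝕜 E] {s t F F' G G' : Set E}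
    (hs : s.Finite) (ht : t.Finite) (hdisj : Disjoint (vectorSpan 𝕜 F) (vectorSpan 𝕜 G))
    (hF' : IsExposed 𝕜 F F') (hG' : IsExposed 𝕜 G G')
    (hFG : IsExposed 𝕜 (convexHull 𝕜 s + convexHull 𝕜 t) (F + G)) :
    IsExposed 𝕜 (convexHull 𝕜 s + convexHull 𝕜 t) (F' + G') ∧ F' + G' ⊆ F + G := by
  refine ⟨?_, Set.add_subset_add hF'.subset hG'.subset⟩
  rcases (F' + G').eq_empty_or_nonempty with h | hne
  · exact h ▸ isExposed_empty
  rw [← convexHull_add] at hFG ⊢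
  have : FiniteDimensional 𝕜 (vectorSpan 𝕜 (convexHull 𝕜 (s + t))) :=
    finiteDimensional_vectorSpan_convexHull (hs.add ht)
  have hle : vectorSpan 𝕜 F ⊔ vectorSpan 𝕜 G ≤ vectorSpan 𝕜 (convexHull 𝕜 (s + t)) := by
    rw [← vectorSpan_add (hne.of_add_left.mono hF'.subset) (hne.of_add_right.mono hG'.subset)]
    exact vectorSpan_mono 𝕜 hFG.subset
  have : FiniteDimensional 𝕜 (vectorSpan 𝕜 F) :=
    Submodule.finiteDimensional_of_le (le_sup_left.trans hle)
  have : FiniteDimensional 𝕜 (vectorSpan 𝕜 G) :=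
    Submodule.finiteDimensional_of_le (le_sup_right.trans hle)
  exact isExposed_trans_of_convexHull (hs.add ht) hFG
    (isExposed_add_of_disjoint_vectorSpan hdisj hF' hG')

end Exposed

theorem subface_minkowski_sum_left {d : ℕ} (s t : Set (EuclideanSpace ℝ (Fin d)))
    (hs : s.Finite) (ht : t.Finite)
    (P Q : Set (EuclideanSpace ℝ (Fin d)))
    (hP : P = convexHull ℝ s) (hQ : Q = convexHull ℝ t)
    (hnd : ∀ F₁ G₁ : Set (EuclideanSpace ℝ (Fin d)),
      F₁.Nonempty → IsExposed ℝ P F₁ → G₁.Nonempty → IsExposed ℝ Q G₁ →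
      Module.finrank ℝ (vectorSpan ℝ (F₁ + G₁)) =
        Module.finrank ℝ (vectorSpan ℝ F₁) + Module.finrank ℝ (vectorSpan ℝ G₁))
    (F F' G : Set (EuclideanSpace ℝ (Fin d)))
    (hF : IsExposed ℝ P F) (hFne : F.Nonempty)
    (hF' : IsExposed ℝ P F') (hF'ne : F'.Nonempty) (hF'F : F' ⊆ F)
    (hG : IsExposed ℝ Q G) (hGne : G.Nonempty)
    (hFG : IsExposed ℝ (P + Q) (F + G)) :
    IsExposed ℝ (P + Q) (F' + G) ∧ F' + G ⊆ F + G := by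
  subst hP hQ
  have hdisj : Disjoint (vectorSpan ℝ F) (vectorSpan ℝ G) :=
    disjoint_of_finrank_sup_eq_add (vectorSpan_add (𝕜 := ℝ) hFne hGne ▸ hnd F G hFne hF hGne hG)
  exact subface_minkowski_sum_left_general hs ht hdisj (hF'.mono hF.subset hF'F) (.refl G) hFG
end

section
/- Let E = EuclideanSpace ℝ (Fin d), let s, t ⊆ E be finite sets, and let P = convexHull ℝ s and Q = convexHull ℝ t. Assume the non-degeneracy condition: for every nonempty exposed face F₁ of P and every nonempty exposed face G₁ of Q, finrank(vectorSpan ℝ (F₁ + G₁)) = finrank(vectorSpan ℝ F₁) + finrank(vectorSpan ℝ G₁). Let F be a nonempty exposed face of P, let G and G' be nonempty exposed faces of Q with G' ⊆ G, and suppose F + G is an exposed face of P + Q. Then F + G' is an exposed face of P + Q, and F + G' ⊆ F + G. -/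
open Pointwise

/-!
Let `F'` be an exposed face of `F` and `G'` one of `G`. Choose `k` agreeing with an exposing
functional of `F'` on the directions of `F`, and with one of `G'` on the directions of `G`. This is
possible because non-degeneracy makes the two direction spaces independent. Maximizers over a
Minkowski sum are sums of maximizers, so `k` exposes `F' + G'` in `F + G`. Finally, an exposed face
of an exposed face of a polytope is exposed in the polytope: if `l` exposes the larger face and `m`
exposes the smaller one in it, then `N • l + m` exposes the smaller one in the polytope for `N`
large.
-/

section OrderedRing

variable {𝕜 E : Type*} [TopologicalSpace 𝕜] [Ring 𝕜] [PartialOrder 𝕜] [AddCommMonoid E]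
  [TopologicalSpace E] [Module 𝕜 E] {A B : Set E} {l m : StrongDual 𝕜 E}

theorem toExposed_congr (h : ∀ x ∈ A, ∀ y ∈ A, l y ≤ l x ↔ m y ≤ m x) :
    l.toExposed A = m.toExposed A :=
  Set.ext fun x => and_congr_right fun hx => forall₂_congr fun y hy => h x hx y hy

theorem inter_toExposed_eq_of_mem (hBA : B ⊆ A) {b : E} (hbB : b ∈ B) (hb : b ∈ l.toExposed A) :
    B ∩ l.toExposed A = l.toExposed B :=
  Set.Subset.antisymm (fun _ hx => ⟨hx.1, fun y hy => hx.2.2 y (hBA hy)⟩) fun _ hx =>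
    ⟨hx.1, hBA hx.1, fun y hy => (hb.2 y hy).trans (hx.2 b hbB)⟩

theorem toExposed_add_s5 [IsOrderedAddMonoid 𝕜] :
    l.toExposed (A + B) = l.toExposed A + l.toExposed B := by
  apply Set.Subset.antisymm
  · rintro _ ⟨⟨a, ha, b, hb, rfl⟩, hmax⟩
    refine Set.add_mem_add ⟨ha, fun a' ha' => ?_⟩ ⟨hb, fun b' hb' => ?_⟩
    · simpa only [map_add, add_le_add_iff_right] using hmax (a' + b) (Set.add_mem_add ha' hb)
    · simpa only [map_add, add_le_add_iff_left] using hmax (a + b') (Set.add_mem_add ha hb')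
  · rintro _ ⟨a, ha, b, hb, rfl⟩
    refine ⟨Set.add_mem_add ha.1 hb.1, ?_⟩
    rintro _ ⟨a', ha', b', hb', rfl⟩
    simpa only [map_add] using add_le_add (ha.2 a' ha') (hb.2 b' hb')

end OrderedRing

section Polytope

variable {𝕜 E : Type*} [Field 𝕜] [LinearOrder 𝕜] [IsStrictOrderedRing 𝕜] [TopologicalSpace 𝕜]
  [IsTopologicalRing 𝕜] [AddCommMonoid E] [TopologicalSpace E] [Module 𝕜 E]

theorem exists_mem_toExposed_smul_add {s : Set E} (hs : s.Finite) {l m : StrongDual 𝕜 E} {b : E}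
    (hb : b ∈ m.toExposed (l.toExposed (convexHull 𝕜 s))) :
    ∃ N : 𝕜, b ∈ (N • l + m).toExposed (convexHull 𝕜 s) := by
  obtain ⟨⟨hbs, hbl⟩, hbm⟩ := hb
  -- Where `l v = l b` the quotient is the junk value `0`; such `v` satisfy `m v ≤ m b` by `hbm`.
  obtain ⟨N, hN⟩ := (hs.image fun v => (m v - m b) / (l b - l v)).bddAbove
  have hvertex : ∀ v ∈ s, (N • l + m) v ≤ (N • l + m) b := by
    intro v hv
    have hvs : v ∈ convexHull 𝕜 s := subset_convexHull 𝕜 s hv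
    simp only [add_apply, smul_apply, smul_eq_mul]
    rcases (hbl v hvs).lt_or_eq with hlt | heq
    · have hratio : (m v - m b) / (l b - l v) ≤ N := hN (Set.mem_image_of_mem _ hv)
      rw [div_le_iff₀ (sub_pos.2 hlt)] at hratio
      linarith
    · have hmv : m v ≤ m b := hbm v ⟨hvs, fun y hy => heq ▸ hbl y hy⟩
      rw [heq]
      gcongr
  exact ⟨N, hbs, fun x hx => convexHull_min hvertex
    (convex_halfSpace_le (N • l + m).toLinearMap.isLinear _) hx⟩

theorem isExposed_convexHull_trans {s A B : Set E} (hs : s.Finite)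
    (hA : IsExposed 𝕜 (convexHull 𝕜 s) A) (hB : IsExposed 𝕜 A B) :
    IsExposed 𝕜 (convexHull 𝕜 s) B := by
  obtain rfl | ⟨b, hb⟩ := B.eq_empty_or_nonempty
  · exact isExposed_empty
  obtain ⟨l, hl⟩ := hA ⟨b, hB.subset hb⟩
  obtain ⟨m, hm⟩ := hB ⟨b, hb⟩
  change A = l.toExposed _ at hl
  change B = m.toExposed A at hm
  obtain ⟨N, hN⟩ := exists_mem_toExposed_smul_add (l := l) (m := m) hs (hl ▸ hm ▸ hb)
  have hconst : ∀ x ∈ A, ∀ y ∈ A, l y = l x := by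
    rw [hl]
    exact fun x hx y hy => le_antisymm (hx.2 y hy.1) (hy.2 x hx.1)
  have hBinter : A ∩ (N • l + m).toExposed (convexHull 𝕜 s) = B := calc
    _ = (N • l + m).toExposed A := inter_toExposed_eq_of_mem hA.subset (hB.subset hb) hN
    _ = m.toExposed A := toExposed_congr fun x hx y hy => by
      simp only [add_apply, smul_apply, hconst x hx y hy, add_le_add_iff_left]
    _ = B := hm.symm
  exact hBinter ▸ hA.inter ContinuousLinearMap.toExposed.isExposed

end Polytope

section VectorSpan

variable {K V : Type*} [AddCommGroup V]

theorem vectorSpan_add_le [Ring K] [Module K V] (A B : Set V) :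
    vectorSpan K (A + B) ≤ vectorSpan K A ⊔ vectorSpan K B := by
  refine Submodule.span_le.2 ?_
  rintro _ ⟨_, ⟨a, ha, b, hb, rfl⟩, _, ⟨a', ha', b', hb', rfl⟩, rfl⟩
  have hsub : a + b -ᵥ (a' + b') = (a -ᵥ a') + (b -ᵥ b') := add_sub_add_comm a b a' b'
  simpa only [hsub, SetLike.mem_coe] using
    Submodule.add_mem_sup (vsub_mem_vectorSpan K ha ha') (vsub_mem_vectorSpan K hb hb')

theorem disjoint_vectorSpan_of_finrank_add [DivisionRing K] [Module K V] {A B : Set V}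
    [FiniteDimensional K (vectorSpan K A)] [FiniteDimensional K (vectorSpan K B)]
    (h : Module.finrank K (vectorSpan K (A + B)) =
      Module.finrank K (vectorSpan K A) + Module.finrank K (vectorSpan K B)) :
    Disjoint (vectorSpan K A) (vectorSpan K B) := by
  have hle := Submodule.finrank_mono (vectorSpan_add_le (K := K) A B)
  have hdim := Submodule.finrank_sup_add_finrank_inf_eq (vectorSpan K A) (vectorSpan K B)
  rw [disjoint_iff, ← Submodule.finrank_eq_zero (R := K)]
  omega

theorem finiteDimensional_vectorSpan_of_subset_convexHull [Field K] [LinearOrder K]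
    [IsStrictOrderedRing K] [Module K V] {A s : Set V} (hs : s.Finite)
    (hA : A ⊆ convexHull K s) : FiniteDimensional K (vectorSpan K A) := by
  have := finiteDimensional_vectorSpan_of_finite K hs
  refine Submodule.finiteDimensional_of_le (?_ : _ ≤ vectorSpan K s)
  calc vectorSpan K A ≤ vectorSpan K (convexHull K s) := vectorSpan_mono K hA
    _ = vectorSpan K s := by
      rw [← direction_affineSpan, affineSpan_convexHull, direction_affineSpan]

end VectorSpan

theorem exists_strongDual_eqOn_of_disjoint {K V : Type*} [Field K] [TopologicalSpace K]
    [IsTopologicalRing K] [AddCommGroup V] [TopologicalSpace V] [Module K V] [SeparatingDual K V]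
    {U W : Submodule K V} [FiniteDimensional K U] [FiniteDimensional K W] (h : Disjoint U W)
    (l m : StrongDual K V) : ∃ k : StrongDual K V, Set.EqOn k l U ∧ Set.EqOn k m W := by
  have hinj : Function.Injective (U.subtype.coprod W.subtype) := by
    rw [← LinearMap.ker_eq_bot, LinearMap.ker_coprod_of_disjoint_range _ _
      (by simpa only [Submodule.range_subtype] using h),
      Submodule.ker_subtype, Submodule.ker_subtype, Submodule.prod_bot]
  obtain ⟨k, hk⟩ := SeparatingDual.dualMap_surjective_iff.2 hinj
    ((l.toLinearMap ∘ₗ U.subtype).coprod (m.toLinearMap ∘ₗ W.subtype))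
  refine ⟨k, fun u hu => ?_, fun w hw => ?_⟩
  · simpa using LinearMap.congr_fun hk (⟨u, hu⟩, 0)
  · simpa using LinearMap.congr_fun hk (0, ⟨w, hw⟩)

theorem toExposed_eq_of_eqOn_vectorSpan {𝕜 E : Type*} [TopologicalSpace 𝕜] [Ring 𝕜]
    [PartialOrder 𝕜] [IsOrderedAddMonoid 𝕜] [AddCommGroup E] [TopologicalSpace E] [Module 𝕜 E]
    {A : Set E} {l m : StrongDual 𝕜 E} (h : Set.EqOn l m (vectorSpan 𝕜 A)) :
    l.toExposed A = m.toExposed A := by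
  refine toExposed_congr fun x hx y hy => ?_
  have hxy : l (x - y) = m (x - y) := h (vsub_mem_vectorSpan 𝕜 hx hy)
  rw [← sub_nonneg, ← map_sub, hxy, map_sub, sub_nonneg]

section MinkowskiSum

variable {𝕜 E : Type*} [Field 𝕜] [LinearOrder 𝕜] [IsStrictOrderedRing 𝕜] [TopologicalSpace 𝕜]
  [IsTopologicalRing 𝕜] [AddCommGroup E] [TopologicalSpace E] [Module 𝕜 E]

theorem isExposed_add_of_disjoint_vectorSpan_s5 [SeparatingDual 𝕜 E] {A A' B B' : Set E}
    [FiniteDimensional 𝕜 (vectorSpan 𝕜 A)] [FiniteDimensional 𝕜 (vectorSpan 𝕜 B)]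
    (hdisj : Disjoint (vectorSpan 𝕜 A) (vectorSpan 𝕜 B))
    (hA' : IsExposed 𝕜 A A') (hB' : IsExposed 𝕜 B B') : IsExposed 𝕜 (A + B) (A' + B') := by
  intro hne
  obtain ⟨l, hl⟩ := hA' hne.of_add_left
  obtain ⟨m, hm⟩ := hB' hne.of_add_right
  obtain ⟨k, hkl, hkm⟩ := exists_strongDual_eqOn_of_disjoint hdisj l m
  refine ⟨k, ?_⟩
  calc A' + B' = l.toExposed A + m.toExposed B := congrArg₂ (· + ·) hl hm
    _ = k.toExposed A + k.toExposed B := by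
      rw [toExposed_eq_of_eqOn_vectorSpan hkl, toExposed_eq_of_eqOn_vectorSpan hkm]
    _ = k.toExposed (A + B) := toExposed_add_s5.symm

theorem subface_minkowski_sum_right_general [SeparatingDual 𝕜 E] {s t F F' G G' : Set E}
    (hs : s.Finite) (ht : t.Finite) (hF : F ⊆ convexHull 𝕜 s) (hG : G ⊆ convexHull 𝕜 t)
    (hdim : Module.finrank 𝕜 (vectorSpan 𝕜 (F + G)) =
      Module.finrank 𝕜 (vectorSpan 𝕜 F) + Module.finrank 𝕜 (vectorSpan 𝕜 G))
    (hFG : IsExposed 𝕜 (convexHull 𝕜 s + convexHull 𝕜 t) (F + G))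
    (hF' : IsExposed 𝕜 F F') (hG' : IsExposed 𝕜 G G') :
    IsExposed 𝕜 (convexHull 𝕜 s + convexHull 𝕜 t) (F' + G') ∧ F' + G' ⊆ F + G := by
  have := finiteDimensional_vectorSpan_of_subset_convexHull hs hF
  have := finiteDimensional_vectorSpan_of_subset_convexHull ht hG
  have hsub : IsExposed 𝕜 (F + G) (F' + G') :=
    isExposed_add_of_disjoint_vectorSpan_s5 (disjoint_vectorSpan_of_finrank_add hdim) hF' hG'
  rw [← convexHull_add] at hFG ⊢
  exact ⟨isExposed_convexHull_trans (hs.add ht) hFG hsub, hsub.subset⟩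

end MinkowskiSum

theorem subface_minkowski_sum_right {d : ℕ} (s t : Set (EuclideanSpace ℝ (Fin d)))
    (hs : s.Finite) (ht : t.Finite)
    (P Q : Set (EuclideanSpace ℝ (Fin d)))
    (hP : P = convexHull ℝ s) (hQ : Q = convexHull ℝ t)
    (hnd : ∀ F₁ G₁ : Set (EuclideanSpace ℝ (Fin d)),
      F₁.Nonempty → IsExposed ℝ P F₁ → G₁.Nonempty → IsExposed ℝ Q G₁ →
      Module.finrank ℝ (vectorSpan ℝ (F₁ + G₁)) =
        Module.finrank ℝ (vectorSpan ℝ F₁) + Module.finrank ℝ (vectorSpan ℝ G₁))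
    (F G G' : Set (EuclideanSpace ℝ (Fin d)))
    (hF : IsExposed ℝ P F) (hFne : F.Nonempty)
    (hG : IsExposed ℝ Q G) (hGne : G.Nonempty)
    (hG' : IsExposed ℝ Q G') (hG'ne : G'.Nonempty) (hG'G : G' ⊆ G)
    (hFG : IsExposed ℝ (P + Q) (F + G)) :
    IsExposed ℝ (P + Q) (F + G') ∧ F + G' ⊆ F + G := by
  subst hP hQ
  exact subface_minkowski_sum_right_general hs ht hF.subset hG.subset (hnd F G hFne hF hGne hG) hFG
    (.refl F) (hG'.mono hG.subset hG'G)
end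

section
/- Let E be a real vector space, let I be a finite index set (a Finset), let A : I → Set E be a family of sets, and let l : E → ℝ be a linear functional. Then the set of maximizers of l on the Minkowski sum ∑_{i ∈ I} A i equals the Minkowski sum of the maximizer sets: {x ∈ ∑_{i ∈ I} A i | ∀ y ∈ ∑_{i ∈ I} A i, l y ≤ l x} = ∑_{i ∈ I} {x ∈ A i | ∀ y ∈ A i, l y ≤ l x}. -/
open Pointwise

/-!
In a sum `a + b` with `a ∈ A` and `b ∈ B`, each summand can be varied while the other is held fixed;
cancelling the fixed value shows that `a + b` maximizes an additive function on `A + B` exactly when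
`a` and `b` maximize it on `A` and `B`. As `{0}` is its own set of maximizers, passing to maximizers
is an endomorphism of the additive monoid of sets, hence commutes with finite sums.
-/

/-- The points of `A` at which `f` attains its maximum over `A`. For a linear functional `f` this is
the face `A^f` of `A` in direction `f`; it is empty when the maximum is not attained. -/
def maximizers {α β : Type*} [Preorder β] (f : α → β) (A : Set α) : Set α :=
  {x ∈ A | ∀ y ∈ A, f y ≤ f x}

theorem maximizers_singleton {α β : Type*} [Preorder β] (f : α → β) (a : α) :
    maximizers f {a} = {a} := by
  simp +contextual [maximizers, Set.ext_iff]

section OrderedCancel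

variable {F E M : Type*} [AddCommMonoid M] [Preorder M] [IsOrderedCancelAddMonoid M] [FunLike F E M]

theorem add_mem_maximizers_add_iff [Add E] [AddHomClass F E M] (l : F) {A B : Set E} {a b : E}
    (ha : a ∈ A) (hb : b ∈ B) :
    a + b ∈ maximizers l (A + B) ↔ a ∈ maximizers l A ∧ b ∈ maximizers l B := by
  constructor
  · rintro ⟨-, hmax⟩
    refine ⟨⟨ha, fun y hy ↦ ?_⟩, ⟨hb, fun y hy ↦ ?_⟩⟩
    · have hle : l y + l b ≤ l a + l b := by
        simpa only [map_add] using hmax (y + b) (Set.add_mem_add hy hb)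
      exact le_of_add_le_add_right hle
    · have hle : l a + l y ≤ l a + l b := by
        simpa only [map_add] using hmax (a + y) (Set.add_mem_add ha hy)
      exact le_of_add_le_add_left hle
  · rintro ⟨⟨-, hamax⟩, ⟨-, hbmax⟩⟩
    refine ⟨Set.add_mem_add ha hb, ?_⟩
    rintro _ ⟨c, hc, d, hd, rfl⟩
    simpa only [map_add] using add_le_add (hamax c hc) (hbmax d hd)

theorem maximizers_add [Add E] [AddHomClass F E M] (l : F) (A B : Set E) :
    maximizers l (A + B) = maximizers l A + maximizers l B := by
  ext x
  constructor
  · intro hx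
    obtain ⟨a, ha, b, hb, rfl⟩ := hx.1
    obtain ⟨hamax, hbmax⟩ := (add_mem_maximizers_add_iff l ha hb).1 hx
    exact Set.add_mem_add hamax hbmax
  · rintro ⟨a, ha, b, hb, rfl⟩
    exact (add_mem_maximizers_add_iff l ha.1 hb.1).2 ⟨ha, hb⟩

/-- Passing to the maximizers of `l`, as an endomorphism of the additive monoid of subsets of `E`
under Minkowski addition. -/
def maximizersAddMonoidHom [AddCommMonoid E] [AddHomClass F E M] (l : F) : Set E →+ Set E where
  toFun := maximizers l
  map_zero' := maximizers_singleton l 0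
  map_add' := maximizers_add l

theorem maximizers_finset_minkowski_sum_general [AddCommMonoid E] [AddHomClass F E M] {ι : Type*}
    (I : Finset ι) (A : ι → Set E) (l : F) :
    {x ∈ ∑ i ∈ I, A i | ∀ y ∈ ∑ i ∈ I, A i, l y ≤ l x} =
      ∑ i ∈ I, {x ∈ A i | ∀ y ∈ A i, l y ≤ l x} :=
  map_sum (maximizersAddMonoidHom l) A I

end OrderedCancel

theorem maximizers_finset_minkowski_sum {E : Type*} [AddCommGroup E] [Module ℝ E]
    {ι : Type*} (I : Finset ι) (A : ι → Set E) (l : E →ₗ[ℝ] ℝ) :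
    {x ∈ ∑ i ∈ I, A i | ∀ y ∈ ∑ i ∈ I, A i, l y ≤ l x} =
      ∑ i ∈ I, {x ∈ A i | ∀ y ∈ A i, l y ≤ l x} :=
  maximizers_finset_minkowski_sum_general I A l
end
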